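/- Fix an integer n ≥ 1 and let P be the n×n matrix with entries P(i,j) = 2^{−n}·binom(n+1, 2j−i+1) for 0 ≤ i,j ≤ n−1 (the base-2 carries matrix; binomial coefficients with out-of-range lower index are zero). Then P is totally positive: for every k ≥ 1 and all indices 0 ≤ i_1 < ⋯ < i_k ≤ n−1 and 0 ≤ j_1 < ⋯ < j_k ≤ n−1, the determinant of the k×k submatrix (P(i_r, j_s))_{1≤r,s≤k} is non-negative. -/

import Mathlib

/-- The base-2 carries matrix for adding `n` numbers:
`P(i,j) = 2^{−n}·binom(n+1, 2j−i+1)` for `0 ≤ i,j ≤ n−1`, where binomial coefficients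
with out-of-range (in particular negative) lower index are zero. -/
noncomputable def carriesMat2 (n : ℕ) (i j : ℕ) : ℝ :=
  if i ≤ 2 * j + 1 then ((n + 1).choose (2 * j + 1 - i) : ℝ) / 2 ^ n else 0

/-- Toeplitz kernel of binomial coefficients. -/
noncomputable def toepBinom (N : ℕ) (a b : ℕ) : ℝ :=
  if a ≤ b then (N.choose (b - a) : ℝ) else 0

theorem toepBinom_succ (N a b : ℕ) :
    toepBinom (N + 1) a b = toepBinom N a b + toepBinom N (a + 1) b := by
  unfold toepBinom
  rcases lt_trichotomy a b with h | h | h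
  · obtain ⟨d, rfl⟩ : ∃ d, b = a + 1 + d := ⟨b - (a + 1), by omega⟩
    have e1 : a + 1 + d - a = d + 1 := by omega
    have e2 : a + 1 + d - (a + 1) = d := by omega
    rw [if_pos (by omega), if_pos (by omega), if_pos (by omega), e1, e2,
      Nat.choose_succ_succ']
    push_cast
    ring
  · subst h
    simp
  · rw [if_neg (by omega), if_neg (by omega), if_neg (by omega)]
    simp

theorem toepBinom_zero (a b : ℕ) : toepBinom 0 a b = if a = b then 1 else 0 := by
  unfold toepBinom
  rcases lt_trichotomy a b with h | h | h
  · rw [if_pos h.le, if_neg h.ne, Nat.choose_eq_zero_of_lt (by omega)]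
    simp
  · subst h
    simp
  · rw [if_neg (by omega), if_neg (by omega)]

theorem toepBinom_det_nonneg (k : ℕ) (col : Fin k → ℕ) (hcol : StrictMono col) (N : ℕ) :
    ∀ row : Fin k → ℕ, StrictMono row →
      0 ≤ Matrix.det (Matrix.of fun r s : Fin k => toepBinom N (row r) (col s)) := by
  induction N with
  | zero =>
    intro row hrow
    by_cases h1 : ∀ r, ∃ s, col s = row r
    · by_cases h2 : ∀ s, ∃ r, row r = col s
      · have hr : Set.range row = Set.range col := by
          apply Set.Subset.antisymm
          · rintro _ ⟨r, rfl⟩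
            exact h1 r
          · rintro _ ⟨s, rfl⟩
            exact h2 s
        have he : row = col := (StrictMono.range_inj hrow hcol).1 hr
        subst he
        have : (Matrix.of fun r s : Fin k => toepBinom 0 (row r) (row s)) = 1 := by
          ext r s
          simp [toepBinom_zero, Matrix.one_apply, hrow.injective.eq_iff]
        rw [this, Matrix.det_one]
        exact zero_le_one
      · push Not at h2
        obtain ⟨s, hs⟩ := h2
        rw [Matrix.det_eq_zero_of_column_eq_zero s]
        intro r
        simp [toepBinom_zero, hs r]
    · push Not at h1
      obtain ⟨r, hr⟩ := h1
      rw [Matrix.det_eq_zero_of_row_eq_zero r]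
      intro s
      simp [toepBinom_zero, (hr s).symm]
  | succ N ih =>
    intro row hrow
    have key : (Matrix.of fun r s : Fin k => toepBinom (N + 1) (row r) (col s)).det =
        ∑ S : Finset (Fin k), (Matrix.of fun r s : Fin k =>
          toepBinom N (if r ∈ S then row r else row r + 1) (col s)).det := by
      have h := (Matrix.detRowAlternating (R := ℝ) (n := Fin k)).toMultilinearMap.map_add_univ
        (fun r s => toepBinom N (row r) (col s)) (fun r s => toepBinom N (row r + 1) (col s))
      convert h using 1
      · change Matrix.det _ = Matrix.det _
        congr 1
        ext r s
        exact toepBinom_succ _ _ _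
      · refine Finset.sum_congr rfl fun S _ => ?_
        change Matrix.det _ = Matrix.det _
        congr 1
        ext r s
        by_cases hr : r ∈ S <;> simp [Finset.piecewise, hr]
    rw [key]
    refine Finset.sum_nonneg fun S _ => ?_
    set row' : Fin k → ℕ := fun r => if r ∈ S then row r else row r + 1 with hrow'
    have hm : Monotone row' := by
      intro a b hab
      rcases hab.eq_or_lt with rfl | hlt
      · exact le_rfl
      · have := hrow hlt
        simp only [hrow']
        split_ifs <;> omega
    by_cases hi : Function.Injective row'
    · exact ih row' (hm.strictMono_of_injective hi)
    · unfold Function.Injective at hi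
      push Not at hi
      obtain ⟨a, b, hab, hne⟩ := hi
      rw [Matrix.det_zero_of_row_eq hne]
      ext s
      change toepBinom N (row' a) (col s) = toepBinom N (row' b) (col s)
      rw [hab]

/-- **The base-2 carries matrix is totally positive** (`TP_∞`): every `k×k` minor, taken
with strictly increasing row indices and strictly increasing column indices within
`{0,…,n−1}`, has non-negative determinant. -/
theorem carriesMat2_totally_positive (n : ℕ) (hn : 1 ≤ n) (k : ℕ) (hk : 1 ≤ k)
    (row col : Fin k → ℕ) (hrow : StrictMono row) (hcol : StrictMono col)
    (hrown : ∀ r, row r ≤ n - 1) (hcoln : ∀ s, col s ≤ n - 1) :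
    0 ≤ Matrix.det (Matrix.of fun r s : Fin k => carriesMat2 n (row r) (col s)) := by
  have hc : StrictMono fun s => 2 * col s + 1 := by
    intro a b hab
    have := hcol hab
    simp only
    omega
  have h := toepBinom_det_nonneg k (fun s => 2 * col s + 1) hc (n + 1) row hrow
  have he : (Matrix.of fun r s : Fin k => carriesMat2 n (row r) (col s)) =
      ((2 : ℝ) ^ n)⁻¹ • (Matrix.of fun r s : Fin k =>
        toepBinom (n + 1) (row r) (2 * col s + 1)) := by
    ext r s
    simp only [Matrix.of_apply, Matrix.smul_apply, smul_eq_mul, carriesMat2, toepBinom]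
    split_ifs
    · rw [div_eq_mul_inv, mul_comm]
    · simp
  rw [he, Matrix.det_smul]
  exact mul_nonneg (by positivity) h
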